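/- The following commutation relations hold: [∂_x, O2] = −X, [∂_y, O1] = −Y, [∂_y, O2] = (1/2)(3E + H), and [∂_x, O1] = (1/2)(3E − H). -/

import Mathlib

open MvPolynomial Complex

noncomputable section

/-- The space of complex polynomials in three variables `x = X 0`, `y = X 1`, `q = X 2`. -/
abbrev V : Type := MvPolynomial (Fin 3) ℂ

/-- Partial derivative `∂_x`. -/
def Dx : Module.End ℂ V := (pderiv (0 : Fin 3)).toLinearMap
/-- Partial derivative `∂_y`. -/
def Dy : Module.End ℂ V := (pderiv (1 : Fin 3)).toLinearMap
/-- Partial derivative `∂_q`. -/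
def Dq : Module.End ℂ V := (pderiv (2 : Fin 3)).toLinearMap
/-- Multiplication by `x`. -/
def Mx : Module.End ℂ V := LinearMap.mulLeft ℂ (X 0)
/-- Multiplication by `y`. -/
def My : Module.End ℂ V := LinearMap.mulLeft ℂ (X 1)
/-- Multiplication by `q`. -/
def Mq : Module.End ℂ V := LinearMap.mulLeft ℂ (X 2)

/-- `X = -y ∂_x - (i/2) q²`. -/
def opX : Module.End ℂ V := -(My * Dx) - (I / 2) • (Mq * Mq)
/-- `H = -x ∂_x + y ∂_y + q ∂_q + 1/2`. -/
def opH : Module.End ℂ V := -(Mx * Dx) + My * Dy + Mq * Dq + (1 / 2 : ℂ) • 1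
/-- `Y = -x ∂_y - (i/2) ∂_q²`. -/
def opY : Module.End ℂ V := -(Mx * Dy) - (I / 2) • (Dq * Dq)
/-- `E = x ∂_x + y ∂_y + 1/2`. -/
def opE : Module.End ℂ V := Mx * Dx + My * Dy + (1 / 2 : ℂ) • 1
/-- The symplectic Dirac operator `D_s = i q ∂_y - ∂_x ∂_q`. -/
def Ds : Module.End ℂ V := I • (Mq * Dy) - Dx * Dq
/-- `X_s = y ∂_q + i x q`. -/
def Xs : Module.End ℂ V := My * Dq + I • (Mx * Mq)
/-- `O1 = x² ∂_x + x y ∂_y - (1/2) x q ∂_q + (i/2) y ∂_q² + (1/2) x`. -/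
def opO1 : Module.End ℂ V :=
  Mx * Mx * Dx + Mx * My * Dy - (1 / 2 : ℂ) • (Mx * Mq * Dq) + (I / 2) • (My * Dq * Dq)
    + (1 / 2 : ℂ) • Mx
/-- `O2 = x y ∂_x + y² ∂_y + (1/2) y q ∂_q + (i/2) x q² + y`. -/
def opO2 : Module.End ℂ V :=
  Mx * My * Dx + My * My * Dy + (1 / 2 : ℂ) • (My * Mq * Dq) + (I / 2) • (Mx * Mq * Mq) + My

lemma pderiv_comm_aux (i j : Fin 3) (p : V) :
    pderiv i (pderiv j p) = pderiv j (pderiv i p) := by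
  have h : ⁅(pderiv i : Derivation ℂ V V), (pderiv j : Derivation ℂ V V)⁆ = 0 := by
    apply MvPolynomial.derivation_ext
    intro k
    simp [Derivation.commutator_apply, pderiv_X, Pi.single_apply]
    split_ifs <;> simp
  have := congrArg (fun D : Derivation ℂ V V => D p) h
  simpa [Derivation.commutator_apply, sub_eq_zero] using this

/-- `[∂_x, O2] = -X`, `[∂_y, O1] = -Y`, `[∂_y, O2] = (1/2)(3E + H)`,
`[∂_x, O1] = (1/2)(3E - H)`. -/
theorem commutators_partials_O :
    Dx * opO2 - opO2 * Dx = -opX ∧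
    Dy * opO1 - opO1 * Dy = -opY ∧
    Dy * opO2 - opO2 * Dy = (1 / 2 : ℂ) • ((3 : ℂ) • opE + opH) ∧
    Dx * opO1 - opO1 * Dx = (1 / 2 : ℂ) • ((3 : ℂ) • opE - opH) := by
  have h10 := pderiv_comm_aux 1 0
  have h20 := pderiv_comm_aux 2 0
  have h21 := pderiv_comm_aux 2 1
  have e2 : (C (1 / 2 : ℂ) : V) * 2 = 1 := by
    rw [show (2 : V) = C 2 from (map_ofNat C 2).symm, ← C_mul]; norm_num
  have e3 : (C (3 : ℂ) : V) = 3 := map_ofNat C 3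
  refine ⟨?_, ?_, ?_, ?_⟩ <;> refine LinearMap.ext fun p => ?_ <;>
    simp only [opO1, opO2, opX, opY, opH, opE, Dx, Dy, Dq, Mx, My, Mq, Module.End.mul_apply,
      LinearMap.sub_apply, LinearMap.add_apply, LinearMap.neg_apply, LinearMap.smul_apply,
      LinearMap.mulLeft_apply, Derivation.coeFn_coe, map_add, map_sub, Derivation.map_smul,
      Derivation.leibniz, pderiv_X_self, Module.End.one_apply, smul_eq_mul,
      pderiv_X_of_ne (show (0 : Fin 3) ≠ 1 by decide),
      pderiv_X_of_ne (show (1 : Fin 3) ≠ 0 by decide),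
      pderiv_X_of_ne (show (2 : Fin 3) ≠ 0 by decide),
      pderiv_X_of_ne (show (2 : Fin 3) ≠ 1 by decide), h10, h20, h21] <;>
    simp only [MvPolynomial.smul_eq_C_mul, e3]
  · ring
  · ring
  · generalize (C (1 / 2 : ℂ) : V) = c at *
    generalize pderiv 0 p = a at *
    generalize pderiv 1 p = b at *
    generalize pderiv 2 p = d at *
    linear_combination (-(X 0 * a) - 2 * X 1 * b - p * (2 * c + 1)) * e2
  · generalize (C (1 / 2 : ℂ) : V) = c at *
    generalize pderiv 0 p = a at *
    generalize pderiv 1 p = b at *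
    generalize pderiv 2 p = d at *
    linear_combination (-(2 * X 0 * a) - X 1 * b - p * c) * e2
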